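/- There exists a constant C ∈ ℝ_{≥0} such that for every f ∈ 𝓕^{[r]}(𝒪_F,S) one has sup_{a∈A} sup_{i∈I_{≤[r]}} |b_{a,i,r}(f)| ≤ C·‖f‖_{C^r}, where b_{a,i,r}(f) are the coefficients of f in the basis (e_{a,i,r})_{a∈A, i∈I_{≤[r]}} of 𝓕^{[r]}(𝒪_F,S). -/

import Mathlib

/-!
Setting (cf. the paper's notations): `O` plays the role of the ring of integers `𝒪_F` of a
finite extension `F` of `ℚ_p`, `E` is the coefficient field (a finite extension of `ℚ_p`
with its p-adic absolute value, normalized by `|x| = p^{-val_F(x)}`, `val_F(p) = [F:ℚ_p]`),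
`S` is the (finite) set of `ℚ_p`-algebra embeddings `F ↪ E`, restricted here to `O`,
`ν : O → ℝ` is the absolute value on `O` (the common restriction of the norm of `E` along any
embedding), `ϖ` is a fixed uniformizer with `ν ϖ = q⁻¹` where `q = p^f` is the cardinality
of the residue field, and `u * ϖ ^ e = p` records the ramification index `e`.
-/

open scoped Classical

noncomputable section

namespace CrPaper

structure Setting (S O E : Type*) [Fintype S] [CommRing O] [NormedField E] where
  q : ℝ
  p : ℕ
  fdeg : ℕ
  hp : p.Prime
  hfdeg : 0 < fdeg
  hq : q = (p : ℝ) ^ fdeg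
  emb : S → O →+* E
  emb_inj : ∀ s, Function.Injective (emb s)
  emb_distinct : Function.Injective emb
  ν : O → ℝ
  norm_emb : ∀ (s) (z : O), ‖emb s z‖ = ν z
  norm_le_one : ∀ (s) (z : O), ‖emb s z‖ ≤ 1
  norm_add_max : ∀ x y : E, ‖x + y‖ ≤ max ‖x‖ ‖y‖
  ϖ : O
  ν_ϖ : ν ϖ = q⁻¹
  mem_ball_iff : ∀ (y : O) (n : ℕ), (∃ z, y = ϖ ^ n * z) ↔ ν y ≤ q⁻¹ ^ n
  ram : ∃ (e : ℕ) (u : O), 0 < e ∧ IsUnit u ∧ u * ϖ ^ e = (p : O)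

variable {S O E : Type*} [Fintype S] [DecidableEq S] [CommRing O] [IsDomain O]
  [NormedField E] [CompleteSpace E] [CharZero E]

/-- The total weight `|i| = ∑ i_σ` of a multi-index. -/
def wt (i : S → ℕ) : ℕ := ∑ s, i s

/-- `i! = ∏ i_σ!` for a multi-index. -/
def mfact (i : S → ℕ) : ℕ := ∏ s, (i s).factorial

/-- The (finite) set `I_{≤N}` of multi-indices of total weight `≤ N`. -/
def Idx (S : Type*) [Fintype S] [DecidableEq S] (N : ℕ) : Finset (S → ℕ) :=
  (Fintype.piFinset fun _ : S => Finset.range (N + 1)).filter fun i => wt i ≤ N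

/-- `z^i = ∏_σ σ(z)^{i_σ}`. -/
def mpow (St : Setting S O E) (z : O) (i : S → ℕ) : E := ∏ s, St.emb s z ^ i s

/-- The Taylor remainder `ε_{f,N}(x,y) = f(x+y) − ∑_{|i|≤N} D_i f(x) y^i / i!`. -/
def epsTay (St : Setting S O E) (N : ℕ) (f : O → E) (D : (S → ℕ) → O → E) (x y : O) : E :=
  f (x + y) - ∑ i ∈ Idx S N, D i x * mpow St y i / (mfact i : E)

/-- `f` is of class `C^r` with the family of bounded functions `D` witnessing the
definition: all `D_i` (`|i| ≤ ⌊r⌋`) are bounded and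
`C_{f,r}(h) = sup_{x ∈ O, y ∈ ϖ^h O} |ε_{f,⌊r⌋}(x,y)| q^{rh} → 0` as `h → ∞`. -/
def IsCrWith (St : Setting S O E) (r : ℝ) (f : O → E) (D : (S → ℕ) → O → E) : Prop :=
  (∀ i ∈ Idx S ⌊r⌋₊, ∃ C : ℝ, ∀ x : O, ‖D i x‖ ≤ C) ∧
  ∀ ε : ℝ, 0 < ε → ∃ M : ℕ, ∀ h : ℕ, M ≤ h → ∀ x z : O,
    ‖epsTay St ⌊r⌋₊ f D x (St.ϖ ^ h * z)‖ * St.q ^ (r * (h : ℝ)) ≤ ε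

/-- `f` is of class `C^r`. -/
def IsCr (St : Setting S O E) (r : ℝ) (f : O → E) : Prop :=
  ∃ D, IsCrWith St r f D

/-- The `C^r`-norm of `f` (relative to the — unique — family `D`):
`max( sup_{i,x} |D_i f(x)/i!| , sup_{x,y} |ε_{f,⌊r⌋}(x,y)|/|y|^r )`. -/
def CrNorm (St : Setting S O E) (r : ℝ) (f : O → E) (D : (S → ℕ) → O → E) : ℝ :=
  max (⨆ i : (Idx S ⌊r⌋₊), ⨆ x : O, ‖D i.1 x / (mfact i.1 : E)‖)
      (⨆ x : O, ⨆ y : O, ‖epsTay St ⌊r⌋₊ f D x y‖ / St.ν y ^ r)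

/-- A compatible system of representatives `A_h` of `O/ϖ^h O` with `A_0 = {0}` and
`A_h ⊆ A_{h+1}`. -/
structure RepSystem (St : Setting S O E) where
  A : ℕ → Finset O
  hA0 : A 0 = {0}
  hmono : ∀ h : ℕ, A h ⊆ A (h + 1)
  hrep : ∀ (h : ℕ) (z : O), ∃! a : O, a ∈ A h ∧ ∃ y : O, z = a + St.ϖ ^ h * y

/-- `A = ⋃_h A_h`. -/
def Aall (St : Setting S O E) (R : RepSystem St) : Set O := ⋃ h : ℕ, (R.A h : Set O)

/-- `l(a)`: the smallest `n` with `a ∈ A_n`. -/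
def lA (St : Setting S O E) (R : RepSystem St) (a : O) : ℕ := sInf {n : ℕ | a ∈ R.A n}

/-- The function `z ↦ 1_{a+ϖ^n O}(z) ((z−a)/ϖ^n)^i` : it takes the value `y^i` at
`z = a + ϖ^n y` and `0` outside the coset `a + ϖ^n O`. -/
def coeval (St : Setting S O E) (a : O) (n : ℕ) (i : S → ℕ) : O → E := fun z =>
  if hz : ∃ y : O, z = a + St.ϖ ^ n * y then mpow St hz.choose i else 0

/-- The function `e_{a,i,r}(z) = ρ(ϖ)^{[l(a)r]} 1_{a+ϖ^{l(a)}O}(z) ((z−a)/ϖ^{l(a)})^i`. -/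
def ebasis (St : Setting S O E) (R : RepSystem St) (ρ : O →+* E) (r : ℝ) (a : O)
    (i : S → ℕ) : O → E := fun z =>
  ρ St.ϖ ^ ⌊(lA St R a : ℝ) * r⌋₊ * coeval St a (lA St R a) i z

set_option linter.unusedSectionVars false

lemma q_gt_one (St : Setting S O E) : 1 < St.q := by
  rw [St.hq]
  exact one_lt_pow₀ (by exact_mod_cast St.hp.one_lt) St.hfdeg.ne'

lemma mpow_mul (St : Setting S O E) (x y : O) (i : S → ℕ) :
    mpow St (x * y) i = mpow St x i * mpow St y i := by
  simp [mpow, mul_pow, Finset.prod_mul_distrib]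

lemma norm_mpow_le (St : Setting S O E) (x : O) (i : S → ℕ) : ‖mpow St x i‖ ≤ 1 := by
  rw [mpow, norm_prod]
  refine Finset.prod_le_one (fun _ _ => norm_nonneg _) fun s _ => ?_
  rw [norm_pow]
  exact pow_le_one₀ (norm_nonneg _) (St.norm_le_one s x)

lemma norm_mpow_unif (St : Setting S O E) (h : ℕ) (i : S → ℕ) :
    ‖mpow St (St.ϖ ^ h) i‖ = (St.q⁻¹ ^ h) ^ wt i := by
  simp [mpow, norm_prod, norm_pow, St.norm_emb, St.ν_ϖ, wt, Finset.prod_pow_eq_pow_sum]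

lemma mem_Idx {N : ℕ} {i : S → ℕ} : i ∈ Idx S N ↔ wt i ≤ N := by
  simp only [Idx, Finset.mem_filter, Fintype.mem_piFinset, Finset.mem_range, and_iff_right_iff_imp]
  intro h s
  have : i s ≤ wt i := Finset.single_le_sum (f := i) (fun _ _ => Nat.zero_le _) (Finset.mem_univ s)
  omega

/-- embeddings vector -/
def uvec (St : Setting S O E) (z : O) : S → E := fun s => St.emb s z

lemma span_uvec (St : Setting S O E) : Submodule.span E (Set.range (uvec St)) = ⊤ := by
  by_contra hne
  obtain ⟨φ, hφ, hle⟩ := Submodule.exists_le_ker_of_lt_top _ (lt_top_iff_ne_top.2 hne)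
  apply hφ
  have hli : LinearIndependent E (fun s : S => ((St.emb s : O →* E) : O → E)) := by
    refine (linearIndependent_monoidHom O E).comp (fun s : S => (St.emb s : O →* E)) ?_
    intro s t hst
    apply St.emb_distinct
    ext z
    exact DFunLike.congr_fun hst z
  have h0 := Fintype.linearIndependent_iff.1 hli (fun s => φ (Pi.single s 1)) (by
    ext z
    have h1 : φ (uvec St z) = 0 := hle (Submodule.subset_span ⟨z, rfl⟩)
    rw [LinearMap.pi_apply_eq_sum_univ φ] at h1
    simp only [Finset.sum_apply, Pi.smul_apply, smul_eq_mul, Pi.zero_apply]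
    rw [← h1]
    refine Finset.sum_congr rfl fun s _ => ?_
    simp only [uvec, smul_eq_mul]
    rw [mul_comm]
    congr 2
    ext t
    simp [Pi.single_apply, eq_comm])
  ext s
  simpa using h0 s

lemma mv_zero (St : Setting S O E) (P : MvPolynomial S E)
    (hP : ∀ z, MvPolynomial.eval (uvec St z) P = 0) : P = 0 := by
  have key : ∀ w : S → E, ∀ t : E, ∀ Q : MvPolynomial S E,
      (∀ z, MvPolynomial.eval (uvec St z) Q = 0) →
      ∀ z, MvPolynomial.eval (uvec St z + t • w) Q = 0 := by
    intro w
    have hw : w ∈ Submodule.span E (Set.range (uvec St)) := by rw [span_uvec]; trivial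
    induction hw using Submodule.span_induction with
    | mem w hw =>
      obtain ⟨z', rfl⟩ := hw
      intro t Q hQ z
      let p : Polynomial E := MvPolynomial.eval₂ Polynomial.C
        (fun s => Polynomial.C (uvec St z s) + Polynomial.X * Polynomial.C (uvec St z' s)) Q
      have hp : ∀ t, p.eval t = MvPolynomial.eval (uvec St z + t • uvec St z') Q := by
        intro t
        have : p.eval t = Polynomial.evalRingHom t p := rfl
        rw [this, MvPolynomial.hom_eval₂, MvPolynomial.eval]
        have e1 : (Polynomial.evalRingHom t).comp Polynomial.C = RingHom.id E := by
          ext; simp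
        rw [e1]
        congr 2
        ext s
        simp
        exact mul_comm _ _
      have hp0 : p = 0 := by
        apply Polynomial.eq_zero_of_infinite_isRoot
        refine Set.Infinite.mono ?_ (Set.infinite_range_of_injective (Nat.cast_injective (R := E)))
        rintro _ ⟨n, rfl⟩
        simp only [Set.mem_ofPred_eq, Polynomial.IsRoot, hp]
        rw [← hQ (z + n * z')]
        congr 2
        ext s
        simp [uvec]
      rw [← hp, hp0, Polynomial.eval_zero]
    | zero => intro t Q hQ z; simpa using hQ z
    | add w1 w2 _ _ h1 h2 =>
      intro t Q hQ z
      let Q' : MvPolynomial S E := MvPolynomial.bind₁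
        (fun s => MvPolynomial.X s + MvPolynomial.C (t * w2 s)) Q
      have hQ' : ∀ v, MvPolynomial.eval v Q' = MvPolynomial.eval (v + t • w2) Q := by
        intro v
        simp only [Q']
        rw [← MvPolynomial.coe_aeval_eq_eval, RingHom.coe_coe, MvPolynomial.aeval_bind₁,
          ← MvPolynomial.coe_aeval_eq_eval, RingHom.coe_coe]
        congr 2
        ext s
        simp
      have := h1 t Q' (fun z => by rw [hQ']; exact h2 t Q hQ z) z
      rw [hQ'] at this
      rw [← this, smul_add, add_assoc]
    | smul c w _ h =>
      intro t Q hQ z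
      rw [smul_smul]
      exact h _ Q hQ z
  apply MvPolynomial.funext
  intro w
  have := key w 1 P hP 0
  simpa [uvec, Pi.add_def] using this

lemma coeff_zero (St : Setting S O E) (N : ℕ) (c : (S → ℕ) → E)
    (hc : ∀ z, ∑ i ∈ Idx S N, c i * mpow St z i = 0) : ∀ i ∈ Idx S N, c i = 0 := by
  let P : MvPolynomial S E := ∑ i ∈ Idx S N,
    MvPolynomial.monomial (Finsupp.equivFunOnFinite.symm i) (c i)
  have hP : P = 0 := by
    apply mv_zero St
    intro z
    rw [← hc z, map_sum]
    refine Finset.sum_congr rfl fun i _ => ?_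
    rw [MvPolynomial.eval_monomial, Finsupp.prod_fintype _ _ (by simp)]
    simp [mpow, uvec]
  intro i hi
  have h := congrArg (MvPolynomial.coeff (Finsupp.equivFunOnFinite.symm i)) hP
  simp only [P, MvPolynomial.coeff_sum, MvPolynomial.coeff_monomial, MvPolynomial.coeff_zero,
    EmbeddingLike.apply_eq_iff_eq, Finset.sum_ite_eq', hi, if_true] at h
  exact h

lemma norm_sum_bound {ι : Type*} (s : Finset ι) (w v : ι → E) (B : ℝ) (hv : ∀ z, ‖v z‖ ≤ B) :
    ‖∑ z ∈ s, w z * v z‖ ≤ (∑ z ∈ s, ‖w z‖) * B := by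
  rw [Finset.sum_mul]
  refine norm_sum_le_of_le _ fun z _ => ?_
  rw [norm_mul]
  exact mul_le_mul_of_nonneg_left (hv z) (norm_nonneg _)

lemma coeff_bound (St : Setting S O E) (N : ℕ) : ∃ K : ℝ, 0 ≤ K ∧
    ∀ (c : (S → ℕ) → E) (B : ℝ), (∀ z, ‖∑ i ∈ Idx S N, c i * mpow St z i‖ ≤ B) →
      ∀ i ∈ Idx S N, ‖c i‖ ≤ K * B := by
  let v : O → (Idx S N → E) := fun z i => mpow St z i.1
  have hspan : Submodule.span E (Set.range v) = ⊤ := by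
    by_contra hne
    obtain ⟨φ, hφ, hle⟩ := Submodule.exists_le_ker_of_lt_top _ (lt_top_iff_ne_top.2 hne)
    apply hφ
    let c : (S → ℕ) → E := fun i => if h : i ∈ Idx S N then φ (Pi.single ⟨i, h⟩ 1) else 0
    have h0 := coeff_zero St N c (by
      intro z
      have h1 : φ (v z) = 0 := hle (Submodule.subset_span ⟨z, rfl⟩)
      rw [LinearMap.pi_apply_eq_sum_univ φ] at h1
      rw [← h1, ← Finset.sum_coe_sort]
      refine Finset.sum_congr rfl fun s _ => ?_
      simp only [c, v, smul_eq_mul, s.2, dif_pos]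
      rw [mul_comm]
      congr 2
      ext t
      simp [Pi.single_apply, eq_comm])
    ext s
    have := h0 s.1 s.2
    simpa [c] using this
  have hex : ∀ i : Idx S N, ∃ w : O →₀ E, w.sum (fun z t => t • v z) = Pi.single i 1 := by
    intro i
    have : Pi.single i 1 ∈ Submodule.span E (Set.range v) := by rw [hspan]; trivial
    exact Finsupp.mem_span_range_iff_exists_finsupp.1 this
  choose w hw using hex
  refine ⟨∑ i : Idx S N, ∑ z ∈ (w i).support, ‖w i z‖,
    Finset.sum_nonneg fun _ _ => Finset.sum_nonneg fun _ _ => norm_nonneg _, ?_⟩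
  intro c B hB i hi
  have hB0 : 0 ≤ B := (norm_nonneg _).trans (hB 0)
  have hci : c i = ∑ z ∈ (w ⟨i, hi⟩).support, w ⟨i, hi⟩ z * ∑ j ∈ Idx S N, c j * mpow St z j := by
    have h1 : ∀ j : Idx S N, ∑ z ∈ (w ⟨i, hi⟩).support, w ⟨i, hi⟩ z * mpow St z j.1
        = (Pi.single ⟨i, hi⟩ 1 : Idx S N → E) j := by
      intro j
      rw [← hw ⟨i, hi⟩, Finsupp.sum, Finset.sum_apply]
      rfl
    simp_rw [Finset.mul_sum]
    rw [Finset.sum_comm, ← Finset.sum_coe_sort]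
    have h2 : ∀ j : Idx S N, ∑ z ∈ (w ⟨i, hi⟩).support, w ⟨i, hi⟩ z * (c j.1 * mpow St z j.1)
        = c j.1 * (Pi.single ⟨i, hi⟩ 1 : Idx S N → E) j := by
      intro j
      rw [← h1, Finset.mul_sum]
      exact Finset.sum_congr rfl fun _ _ => by ring
    rw [Finset.sum_congr rfl fun j _ => h2 j]
    simp [Pi.single_apply]
  calc ‖c i‖ ≤ (∑ z ∈ (w ⟨i, hi⟩).support, ‖w ⟨i, hi⟩ z‖) * B := by
        rw [hci]
        exact norm_sum_bound _ _ _ B hB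
    _ ≤ _ := by
        refine mul_le_mul_of_nonneg_right ?_ hB0
        exact Finset.single_le_sum (f := fun i : Idx S N => ∑ z ∈ (w i).support, ‖w i z‖)
          (fun _ _ => Finset.sum_nonneg fun _ _ => norm_nonneg _) (Finset.mem_univ (⟨i, hi⟩ : Idx S N))

lemma norm_sum_ultra {ι : Type*} (St : Setting S O E) (s : Finset ι) (v : ι → E) (B : ℝ)
    (hB : 0 ≤ B) (hv : ∀ z ∈ s, ‖v z‖ ≤ B) : ‖∑ z ∈ s, v z‖ ≤ B := by
  induction s using Finset.induction_on with
  | empty => simpa using hB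
  | insert a s ha ih =>
    rw [Finset.sum_insert ha]
    refine (St.norm_add_max _ _).trans (max_le (hv a (Finset.mem_insert_self _ _)) ?_)
    exact ih fun z hz => hv z (Finset.mem_insert_of_mem hz)

lemma eps_zero (St : Setting S O E) {r : ℝ} (hr : 0 ≤ r) {f : O → E} {D : (S → ℕ) → O → E}
    (hD : IsCrWith St r f D) (x y : O) (hy : St.ν y = 0) : epsTay St ⌊r⌋₊ f D x y = 0 := by
  have hq := q_gt_one St
  rw [← norm_le_zero_iff]
  refine le_of_forall_pos_le_add fun δ hδ => ?_
  obtain ⟨M, hM⟩ := hD.2 δ hδ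
  obtain ⟨z, rfl⟩ := (St.mem_ball_iff y M).2 (by rw [hy]; positivity)
  have h1 := hM M le_rfl x z
  have h2 : 1 ≤ St.q ^ (r * (M : ℝ)) := Real.one_le_rpow hq.le (by positivity)
  have h3 := le_mul_of_one_le_right (norm_nonneg (epsTay St ⌊r⌋₊ f D x (St.ϖ ^ M * z))) h2
  linarith

lemma norm_term_le (St : Setting S O E) (d : E) (x : O) (i : S → ℕ) :
    ‖d * mpow St x i‖ ≤ ‖d‖ := by
  rw [norm_mul]
  exact mul_le_of_le_one_right (norm_nonneg _) (norm_mpow_le St x i)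

lemma D_bound (St : Setting S O E) {r : ℝ} {f : O → E} {D : (S → ℕ) → O → E}
    (hD : IsCrWith St r f D) (i : S → ℕ) (hi : i ∈ Idx S ⌊r⌋₊) (x : O) :
    ‖D i x / (mfact i : E)‖ ≤ CrNorm St r f D := by
  refine le_trans ?_ (le_max_left _ _)
  obtain ⟨C, hC⟩ := hD.1 i hi
  have h1 : ‖D i x / (mfact i : E)‖ ≤ ⨆ x : O, ‖D i x / (mfact i : E)‖ := by
    refine le_ciSup (f := fun x : O => ‖D i x / (mfact i : E)‖) ⟨C / ‖(mfact i : E)‖, ?_⟩ x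
    rintro _ ⟨y, rfl⟩
    simp only [norm_div]
    exact div_le_div_of_nonneg_right (hC y) (norm_nonneg _)
  refine h1.trans ?_
  exact le_ciSup (f := fun i : Idx S ⌊r⌋₊ => ⨆ x : O, ‖D i.1 x / (mfact i.1 : E)‖)
    (Set.finite_range _).bddAbove ⟨i, hi⟩

lemma CrNorm_nonneg (St : Setting S O E) {r : ℝ} (f : O → E) (D : (S → ℕ) → O → E) :
    0 ≤ CrNorm St r f D :=
  le_max_of_le_left (Real.iSup_nonneg fun _ => Real.iSup_nonneg fun _ => norm_nonneg _)

lemma eps_bound (St : Setting S O E) {r : ℝ} (hr : 0 ≤ r) (hν : ∀ z, 0 ≤ St.ν z)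
    {f : O → E} {D : (S → ℕ) → O → E}
    (hD : IsCrWith St r f D) (Bf : ℝ) (hBf : ∀ z, ‖f z‖ ≤ Bf) (x y : O) (h : ℕ) :
    ‖epsTay St ⌊r⌋₊ f D x (St.ϖ ^ h * y)‖ ≤ CrNorm St r f D * (St.q⁻¹ ^ h) ^ r := by
  have hq := q_gt_one St
  have hq0 : 0 < St.q := by linarith
  have hN := CrNorm_nonneg St (r := r) f D
  -- crude bound
  obtain ⟨B1, hB1⟩ : ∃ B1, ∀ x y, ‖epsTay St ⌊r⌋₊ f D x y‖ ≤ B1 := by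
    refine ⟨Bf + CrNorm St r f D, fun x y => ?_⟩
    refine (norm_sub_le _ _).trans (add_le_add (hBf _) ?_)
    refine norm_sum_ultra St _ _ _ hN fun i hi => ?_
    rw [mul_div_right_comm]
    exact (norm_term_le St _ _ _).trans (D_bound St hD i hi x)
  have hB10 : 0 ≤ B1 := (norm_nonneg _).trans (hB1 0 0)
  have hle1 : ∀ y, St.ν y ≤ 1 := fun y => by
    simpa using (St.mem_ball_iff y 0).1 ⟨y, by simp⟩
  obtain ⟨M, hM⟩ := hD.2 1 one_pos
  have hF : ∀ x y, ‖epsTay St ⌊r⌋₊ f D x y‖ / St.ν y ^ r ≤ St.q ^ r + B1 / (St.q⁻¹ ^ M) ^ r := by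
    intro x y
    have hpos1 : 0 ≤ St.q ^ r := by positivity
    have hpos2 : 0 ≤ B1 / (St.q⁻¹ ^ M) ^ r := by positivity
    rcases (hν y).eq_or_lt with h0 | h0
    · rw [eps_zero St hr hD x y h0.symm]
      simp only [norm_zero, zero_div]
      positivity
    · obtain ⟨h, hlt, hle⟩ := exists_nat_pow_near_of_lt_one h0 (hle1 y) (inv_pos.2 hq0)
        (inv_lt_one_of_one_lt₀ hq)
      rcases le_or_gt M h with hMh | hMh
      · obtain ⟨z, rfl⟩ := (St.mem_ball_iff y h).2 hle
        have h1 := hM h hMh x z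
        have h2 : ‖epsTay St ⌊r⌋₊ f D x (St.ϖ ^ h * z)‖ / St.ν (St.ϖ ^ h * z) ^ r ≤ St.q ^ r := by
          rw [div_le_iff₀ (Real.rpow_pos_of_pos h0 r)]
          have h3 : (St.q⁻¹ ^ (h + 1)) ^ r ≤ St.ν (St.ϖ ^ h * z) ^ r :=
            Real.rpow_le_rpow (by positivity) hlt.le hr
          have h4 : St.q ^ r * (St.q⁻¹ ^ (h + 1)) ^ r * St.q ^ (r * (h : ℝ)) = 1 := by
            rw [mul_comm r, Real.rpow_mul hq0.le, Real.rpow_natCast,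
              ← Real.mul_rpow (by positivity) (by positivity),
              ← Real.mul_rpow (by positivity) (by positivity)]
            have : St.q * St.q⁻¹ ^ (h + 1) * St.q ^ h = 1 := by
              rw [inv_pow, pow_succ]; field_simp
            rw [this, Real.one_rpow]
          have h5 : 0 < St.q ^ (r * (h : ℝ)) := by positivity
          have h6 : ‖epsTay St ⌊r⌋₊ f D x (St.ϖ ^ h * z)‖ ≤ St.q ^ r * (St.q⁻¹ ^ (h + 1)) ^ r := by
            refine le_of_mul_le_mul_right ?_ h5
            rw [h4]; exact h1
          exact h6.trans (mul_le_mul_of_nonneg_left h3 hpos1)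
        linarith
      · have h3 : (St.q⁻¹ ^ M) ^ r ≤ St.ν y ^ r := by
          refine Real.rpow_le_rpow (by positivity) (le_trans ?_ hlt.le) hr
          exact pow_le_pow_of_le_one (by positivity) (inv_lt_one_of_one_lt₀ hq).le hMh
        have : ‖epsTay St ⌊r⌋₊ f D x y‖ / St.ν y ^ r ≤ B1 / (St.q⁻¹ ^ M) ^ r :=
          div_le_div₀ hB10 (hB1 x y) (by positivity) h3
        linarith
  have hsup : ∀ x y, ‖epsTay St ⌊r⌋₊ f D x y‖ / St.ν y ^ r ≤ CrNorm St r f D := by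
    intro x y
    refine le_trans ?_ (le_max_right _ _)
    have h1 : ‖epsTay St ⌊r⌋₊ f D x y‖ / St.ν y ^ r
        ≤ ⨆ y : O, ‖epsTay St ⌊r⌋₊ f D x y‖ / St.ν y ^ r :=
      le_ciSup (f := fun y : O => ‖epsTay St ⌊r⌋₊ f D x y‖ / St.ν y ^ r)
        ⟨_, by rintro _ ⟨y, rfl⟩; exact hF x y⟩ y
    refine h1.trans ?_
    exact le_ciSup (f := fun x : O => ⨆ y : O, ‖epsTay St ⌊r⌋₊ f D x y‖ / St.ν y ^ r)
      ⟨_, by rintro _ ⟨x, rfl⟩; exact ciSup_le fun y => hF x y⟩ x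
  rcases (hν (St.ϖ ^ h * y)).eq_or_lt with h0 | h0
  · rw [eps_zero St hr hD x _ h0.symm, norm_zero]
    positivity
  · have h1 := hsup x (St.ϖ ^ h * y)
    rw [div_le_iff₀ (Real.rpow_pos_of_pos h0 r)] at h1
    refine h1.trans (mul_le_mul_of_nonneg_left ?_ hN)
    exact Real.rpow_le_rpow h0.le ((St.mem_ball_iff _ h).1 ⟨y, rfl⟩) hr

lemma D_unique (St : Setting S O E) {r : ℝ} (hr : 0 ≤ r)
    {f : O → E} {D : (S → ℕ) → O → E} (hD : IsCrWith St r f D) (a : O) (M : ℕ)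
    (c : (S → ℕ) → E)
    (hc : ∀ z, f (a + St.ϖ ^ M * z) = ∑ i ∈ Idx S ⌊r⌋₊, c i * mpow St (St.ϖ ^ M * z) i) :
    ∀ i ∈ Idx S ⌊r⌋₊, c i = D i a / (mfact i : E) := by
  have hq := q_gt_one St
  have hq0 : 0 < St.q := by linarith
  obtain ⟨K, hK0, hK⟩ := coeff_bound St ⌊r⌋₊
  intro i hi
  rw [← sub_eq_zero, ← norm_le_zero_iff]
  refine le_of_forall_pos_le_add fun δ hδ => ?_
  obtain ⟨M', hM'⟩ := hD.2 (δ / (K + 1)) (by positivity)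
  set h := max M M' with hh
  have hmain := hK (fun i => (c i - D i a / (mfact i : E)) * mpow St (St.ϖ ^ h) i)
    (δ / (K + 1) / St.q ^ (r * (h : ℝ))) (by
      intro z
      have h1 := hM' h (le_max_right _ _) a z
      rw [le_div_iff₀ (by positivity)]
      refine le_of_eq_of_le ?_ h1
      congr 2
      rw [epsTay]
      have h2 : St.ϖ ^ h * z = St.ϖ ^ M * (St.ϖ ^ (h - M) * z) := by
        rw [← mul_assoc, ← pow_add]
        congr 2
        omega
      have h3 := hc (St.ϖ ^ (h - M) * z)
      rw [← h2] at h3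
      rw [h3, ← Finset.sum_sub_distrib]
      refine Finset.sum_congr rfl fun j _ => ?_
      rw [mpow_mul]
      ring) i hi
  rw [norm_mul, norm_mpow_unif] at hmain
  have hwt : (wt i : ℝ) ≤ r := le_trans (by exact_mod_cast mem_Idx.1 hi) (Nat.floor_le hr)
  have h5 : 1 ≤ (St.q⁻¹ ^ h) ^ wt i * St.q ^ (r * (h : ℝ)) := by
    have h6 : St.q ^ ((wt i : ℝ) * (h : ℝ)) ≤ St.q ^ (r * (h : ℝ)) :=
      Real.rpow_le_rpow_of_exponent_le hq.le (mul_le_mul_of_nonneg_right hwt (by positivity))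
    have h7 : (St.q⁻¹ ^ h) ^ wt i * St.q ^ ((wt i : ℝ) * (h : ℝ)) = 1 := by
      rw [← Nat.cast_mul, Real.rpow_natCast, inv_pow, inv_pow, ← pow_mul, mul_comm h]
      exact inv_mul_cancel₀ (by positivity)
    rw [← h7]
    exact mul_le_mul_of_nonneg_left h6 (by positivity)
  have h8 : 0 < St.q ^ (r * (h : ℝ)) := by positivity
  have h9 : ‖c i - D i a / (mfact i : E)‖ ≤ K * (δ / (K + 1)) := by
    calc ‖c i - D i a / (mfact i : E)‖
        ≤ ‖c i - D i a / (mfact i : E)‖ * ((St.q⁻¹ ^ h) ^ wt i * St.q ^ (r * (h : ℝ))) :=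
          le_mul_of_one_le_right (norm_nonneg _) h5
      _ = ‖c i - D i a / (mfact i : E)‖ * (St.q⁻¹ ^ h) ^ wt i * St.q ^ (r * (h : ℝ)) := by ring
      _ ≤ K * (δ / (K + 1) / St.q ^ (r * (h : ℝ))) * St.q ^ (r * (h : ℝ)) :=
          mul_le_mul_of_nonneg_right hmain h8.le
      _ = K * (δ / (K + 1)) := by field_simp
  have h10 : K * (δ / (K + 1)) ≤ δ := by
    rw [mul_div_assoc', div_le_iff₀ (by positivity)]
    nlinarith
  linarith

/-- polynomial functions -/
def PolAt (St : Setting S O E) (n N : ℕ) (g : O → E) : Prop :=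
  ∃ c : (S → ℕ) → E, ∀ y, g y = ∑ i ∈ Idx S N, c i * mpow St (St.ϖ ^ n * y) i

lemma PolAt.zero (St : Setting S O E) (n N : ℕ) : PolAt St n N (fun _ => 0) :=
  ⟨fun _ => 0, by simp⟩

lemma PolAt.smul {St : Setting S O E} {n N : ℕ} {g : O → E} (t : E) (hg : PolAt St n N g) :
    PolAt St n N (fun y => t * g y) := by
  obtain ⟨c, hc⟩ := hg
  refine ⟨fun i => t * c i, fun y => ?_⟩
  beta_reduce
  rw [hc, Finset.mul_sum]
  exact Finset.sum_congr rfl fun _ _ => by ring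

lemma PolAt.sum {ι : Type*} {St : Setting S O E} {n N : ℕ} (s : Finset ι) (g : ι → O → E)
    (hg : ∀ x ∈ s, PolAt St n N (g x)) : PolAt St n N (fun y => ∑ x ∈ s, g x y) := by
  induction s using Finset.induction_on with
  | empty => simpa using PolAt.zero St n N
  | insert a s ha ih =>
    obtain ⟨c, hc⟩ := ih fun x hx => hg x (Finset.mem_insert_of_mem hx)
    obtain ⟨c', hc'⟩ := hg a (Finset.mem_insert_self _ _)
    refine ⟨fun i => c' i + c i, fun y => ?_⟩
    beta_reduce at hc ⊢
    rw [Finset.sum_insert ha, hc, hc', ← Finset.sum_add_distrib]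
    exact Finset.sum_congr rfl fun _ _ => by ring

lemma PolAt.mpow (St : Setting S O E) {n N : ℕ} {j : S → ℕ} (hj : j ∈ Idx S N) :
    PolAt St n N (fun y => mpow St (St.ϖ ^ n * y) j) := by
  refine ⟨fun i => if i = j then 1 else 0, fun y => ?_⟩
  simp [hj]

lemma PolAt.mv (St : Setting S O E) {n N : ℕ} (P : MvPolynomial S E) (hP : P.totalDegree ≤ N) :
    PolAt St n N (fun y => MvPolynomial.eval (uvec St (St.ϖ ^ n * y)) P) := by
  simp only [MvPolynomial.eval_eq']
  refine PolAt.sum _ _ fun d hd => PolAt.smul _ ?_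
  refine PolAt.mpow St (j := d) ?_
  rw [mem_Idx]
  refine le_trans ?_ hP
  have := MvPolynomial.le_totalDegree hd
  rwa [Finsupp.sum_fintype _ _ (by simp)] at this

lemma PolAt.affine (St : Setting S O E) {n N m : ℕ} (hϖ : St.ϖ ≠ 0) (hmn : m ≤ n) (y0 : O)
    {i : S → ℕ} (hi : i ∈ Idx S N) :
    PolAt St n N (fun y => CrPaper.mpow St (y0 + St.ϖ ^ (n - m) * y) i) := by
  let P : MvPolynomial S E := ∏ s, (MvPolynomial.C (St.emb s y0) +
    MvPolynomial.C ((St.emb s St.ϖ ^ m)⁻¹) * MvPolynomial.X s) ^ i s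
  have hdeg : P.totalDegree ≤ N := by
    refine (MvPolynomial.totalDegree_finsetProd _ _).trans ?_
    refine le_trans (Finset.sum_le_sum fun s _ => ?_) (mem_Idx.1 hi)
    refine (MvPolynomial.totalDegree_pow _ _).trans ?_
    refine (Nat.mul_le_mul_left _ (?_ : _ ≤ 1)).trans (by simp)
    refine (MvPolynomial.totalDegree_add _ _).trans (max_le (by simp) ?_)
    refine (MvPolynomial.totalDegree_mul _ _).trans ?_
    simp
  have h := PolAt.mv St (n := n) P hdeg
  convert h using 2 with y
  simp only [P, CrPaper.mpow, map_prod, map_pow, map_add, map_mul, MvPolynomial.eval_C,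
    MvPolynomial.eval_X, uvec]
  refine Finset.prod_congr rfl fun s _ => ?_
  have hs : St.emb s St.ϖ ≠ 0 := by
    rw [Ne, map_eq_zero_iff _ (St.emb_inj s)]
    exact hϖ
  have : St.emb s St.ϖ ^ n = St.emb s St.ϖ ^ m * St.emb s St.ϖ ^ (n - m) := by
    rw [← pow_add]; congr 1; omega
  rw [this]
  field_simp

lemma A_mono (St : Setting S O E) (R : RepSystem St) {m n : ℕ} (h : m ≤ n) : R.A m ⊆ R.A n :=
  monotone_nat_of_le_succ (f := R.A) R.hmono h

lemma mem_lA (St : Setting S O E) (R : RepSystem St) {a : O} (ha : a ∈ Aall St R) :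
    a ∈ R.A (lA St R a) := by
  have : Set.Nonempty {n : ℕ | a ∈ R.A n} := by
    simpa [Aall, Set.Nonempty] using ha
  exact Nat.sInf_mem this

lemma lA_le (St : Setting S O E) (R : RepSystem St) {a : O} {n : ℕ} (ha : a ∈ R.A n) :
    lA St R a ≤ n := Nat.sInf_le ha

lemma rep_uniq (St : Setting S O E) (R : RepSystem St) {a a' y : O} {n : ℕ} (ha : a ∈ R.A n)
    (ha' : a' ∈ R.A n) (h : a = a' + St.ϖ ^ n * y) : a = a' :=
  (R.hrep n a).unique ⟨ha, 0, by simp⟩ ⟨ha', y, h⟩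

lemma coeval_apply (St : Setting S O E) (hϖ : St.ϖ ≠ 0) (a : O) (n : ℕ) (i : S → ℕ) (y : O) :
    coeval St a n i (a + St.ϖ ^ n * y) = mpow St y i := by
  have hz : ∃ y' : O, a + St.ϖ ^ n * y = a + St.ϖ ^ n * y' := ⟨y, rfl⟩
  rw [coeval, dif_pos hz]
  congr 1
  have := hz.choose_spec
  exact (mul_left_cancel₀ (pow_ne_zero n hϖ) (add_left_cancel this)).symm

lemma coeval_not (St : Setting S O E) (a : O) (n : ℕ) (i : S → ℕ) (z : O)
    (hz : ∀ y, z ≠ a + St.ϖ ^ n * y) : coeval St a n i z = 0 := by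
  rw [coeval, dif_neg]
  push Not
  exact hz

lemma norm_coeval (St : Setting S O E) (a : O) (n : ℕ) (i : S → ℕ) (z : O) :
    ‖coeval St a n i z‖ ≤ 1 := by
  rw [coeval]
  split_ifs
  · exact norm_mpow_le _ _ _
  · simp

lemma coeval_disj (St : Setting S O E) (R : RepSystem St) {a a' y : O} {m M : ℕ} (hmM : m ≤ M)
    (ha : a ∈ R.A m) (ha' : a' ∈ R.A m) (hne : a ≠ a') (i : S → ℕ) :
    coeval St a' m i (a + St.ϖ ^ M * y) = 0 := by
  apply coeval_not
  intro w hw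
  apply hne
  refine rep_uniq St R (y := w - St.ϖ ^ (M - m) * y) ha ha' ?_
  have : St.ϖ ^ M = St.ϖ ^ m * St.ϖ ^ (M - m) := by rw [← pow_add]; congr 1; omega
  rw [this] at hw
  linear_combination hw

/-- partial sums -/
def gpart (St : Setting S O E) (R : RepSystem St) (ρ : O →+* E) (r : ℝ)
    (T : Finset (O × (S → ℕ))) (b : O × (S → ℕ) → E) (n : ℕ) (z : O) : E :=
  ∑ x ∈ T, if lA St R x.1 ≤ n then b x * ebasis St R ρ r x.1 x.2 z else 0

lemma gpart_pol (St : Setting S O E) (R : RepSystem St) (ρ : O →+* E) (r : ℝ) (hϖ : St.ϖ ≠ 0)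
    (T : Finset (O × (S → ℕ))) (b : O × (S → ℕ) → E) (n : ℕ)
    (hT : ∀ x ∈ T, x.1 ∈ Aall St R ∧ x.2 ∈ Idx S ⌊r⌋₊) (a : O) :
    PolAt St n ⌊r⌋₊ (fun y => gpart St R ρ r T b n (a + St.ϖ ^ n * y)) := by
  refine PolAt.sum _ _ fun x hx => ?_
  by_cases hl : lA St R x.1 ≤ n
  swap
  · simpa [hl] using PolAt.zero St n _
  simp only [hl, if_true]
  refine PolAt.smul _ (PolAt.smul _ ?_)
  have hpow : St.ϖ ^ n = St.ϖ ^ lA St R x.1 * St.ϖ ^ (n - lA St R x.1) := by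
    rw [← pow_add]; congr 1; omega
  by_cases hex : ∃ y0, a = x.1 + St.ϖ ^ lA St R x.1 * y0
  · obtain ⟨y0, hy0⟩ := hex
    have := PolAt.affine St hϖ hl y0 (hT x hx).2
    convert this using 2 with y
    rw [← coeval_apply St hϖ x.1 (lA St R x.1)]
    congr 1
    rw [hpow, hy0]
    ring
  · convert PolAt.zero St n _ using 2 with y
    apply coeval_not
    intro w hw
    refine hex ⟨w - St.ϖ ^ (n - lA St R x.1) * y, ?_⟩
    rw [hpow] at hw
    linear_combination hw

lemma gpart_loc (St : Setting S O E) (R : RepSystem St) (ρ : O →+* E) (r : ℝ)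
    (T : Finset (O × (S → ℕ))) (b : O × (S → ℕ) → E) (n : ℕ)
    (hT : ∀ x ∈ T, x.1 ∈ Aall St R ∧ x.2 ∈ Idx S ⌊r⌋₊) (a : O) (ha : a ∈ R.A n) :
    ∃ k, ∀ y, ∑ x ∈ T, b x * ebasis St R ρ r x.1 x.2 (a + St.ϖ ^ (n + k) * y)
      = gpart St R ρ r T b n (a + St.ϖ ^ (n + k) * y) := by
  refine ⟨∑ x ∈ T, lA St R x.1, fun y => ?_⟩
  refine Finset.sum_congr rfl fun x hx => ?_
  split_ifs with hl
  · rfl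
  · have h1 : lA St R x.1 ≤ ∑ x ∈ T, lA St R x.1 :=
      Finset.single_le_sum (f := fun x : O × (S → ℕ) => lA St R x.1) (fun _ _ => Nat.zero_le _) hx
    rw [ebasis, coeval_disj St R (by omega) (A_mono St R (by omega) ha) (mem_lA St R (hT x hx).1)]
    · simp
    · rintro rfl
      exact hl (lA_le St R ha)

lemma gpart_taylor (St : Setting S O E) (R : RepSystem St) (ρ : O →+* E) {r : ℝ} (hr : 0 ≤ r)
    (hϖ : St.ϖ ≠ 0)
    (T : Finset (O × (S → ℕ))) (b : O × (S → ℕ) → E) (n : ℕ)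
    (hT : ∀ x ∈ T, x.1 ∈ Aall St R ∧ x.2 ∈ Idx S ⌊r⌋₊) (a : O) (ha : a ∈ R.A n)
    {f : O → E} {D : (S → ℕ) → O → E}
    (hf : ∀ z : O, f z = ∑ x ∈ T, b x * ebasis St R ρ r x.1 x.2 z)
    (hD : IsCrWith St r f D) (y : O) :
    gpart St R ρ r T b n (a + St.ϖ ^ n * y)
      = ∑ i ∈ Idx S ⌊r⌋₊, D i a / (mfact i : E) * mpow St (St.ϖ ^ n * y) i := by
  obtain ⟨c, hc⟩ := gpart_pol St R ρ r hϖ T b n hT a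
  beta_reduce at hc
  obtain ⟨k, hk⟩ := gpart_loc St R ρ r T b n hT a ha
  have huniq := D_unique St hr hD a (n + k) c (by
    intro z
    rw [hf, hk]
    have := hc (St.ϖ ^ k * z)
    rwa [← mul_assoc, ← pow_add] at this)
  rw [hc]
  exact Finset.sum_congr rfl fun i hi => by rw [huniq i hi]

lemma layer_sum (St : Setting S O E) (R : RepSystem St) (ρ : O →+* E) (r : ℝ)
    (hϖ : St.ϖ ≠ 0)
    (T : Finset (O × (S → ℕ))) (b : O × (S → ℕ) → E)
    (hT : ∀ x ∈ T, x.1 ∈ Aall St R ∧ x.2 ∈ Idx S ⌊r⌋₊) (a : O) (ha : a ∈ Aall St R) (y : O) :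
    ∑ i ∈ Idx S ⌊r⌋₊, (if (a, i) ∈ T then b (a, i) * ρ St.ϖ ^ ⌊(lA St R a : ℝ) * r⌋₊ else 0)
        * mpow St y i
      = ∑ x ∈ T, if lA St R x.1 = lA St R a then
          b x * ebasis St R ρ r x.1 x.2 (a + St.ϖ ^ lA St R a * y) else 0 := by
  have h1 : ∀ x ∈ T, (if lA St R x.1 = lA St R a then
          b x * ebasis St R ρ r x.1 x.2 (a + St.ϖ ^ lA St R a * y) else 0)
      = if x.1 = a then b x * ρ St.ϖ ^ ⌊(lA St R a : ℝ) * r⌋₊ * mpow St y x.2 else 0 := by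
    intro x hx
    by_cases hxa : x.1 = a
    · simp only [hxa, if_true, ebasis, coeval_apply St hϖ]
      ring
    · rw [if_neg hxa]
      split_ifs with hl
      · have := mem_lA St R (hT x hx).1
        rw [ebasis, hl, coeval_disj St R le_rfl (mem_lA St R ha) (hl ▸ this) (Ne.symm hxa)]
        simp
      · rfl
  rw [Finset.sum_congr rfl h1, ← Finset.sum_filter]
  simp only [ite_mul, zero_mul]
  rw [← Finset.sum_filter]
  refine Finset.sum_nbij' (fun i => (a, i)) (fun x => x.2) ?_ ?_ ?_ ?_ ?_
  · intro i hi
    simp only [Finset.mem_filter] at hi ⊢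
    exact ⟨hi.2, by trivial⟩
  · intro x hx
    simp only [Finset.mem_filter] at hx ⊢
    refine ⟨(hT x hx.1).2, ?_⟩
    rw [← hx.2]
    exact hx.1
  · intro i _
    rfl
  · intro x hx
    simp only [Finset.mem_filter] at hx
    rw [← hx.2]
  · intro i _
    rfl

/-- there is `C ≥ 0` such that for every `f ∈ 𝓕^{[r]}(O,S)`, its coefficients
`b_{a,i,r}(f)` in the basis `(e_{a,i,r})` satisfy `sup_{a,i} |b_{a,i,r}(f)| ≤ C ‖f‖_{C^r}`. -/
theorem statement12 (St : Setting S O E) (R : RepSystem St) (ρ : O →+* E)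
    (hρ : ∀ z : O, ‖ρ z‖ = St.ν z) (r : ℝ) (hr : 0 ≤ r) :
    ∃ C : ℝ, 0 ≤ C ∧
      ∀ (T : Finset (O × (S → ℕ))) (b : O × (S → ℕ) → E)
        (f : O → E) (D : (S → ℕ) → O → E),
        (∀ x ∈ T, x.1 ∈ Aall St R ∧ x.2 ∈ Idx S ⌊r⌋₊) →
        (∀ z : O, f z = ∑ x ∈ T, b x * ebasis St R ρ r x.1 x.2 z) →
        IsCrWith St r f D →
        ∀ x ∈ T, ‖b x‖ ≤ C * CrNorm St r f D := by
  have hq := q_gt_one St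
  have hq0 : 0 < St.q := by linarith
  have hν : ∀ z, 0 ≤ St.ν z := fun z => by rw [← hρ]; exact norm_nonneg _
  have hϖ : St.ϖ ≠ 0 := by
    intro h0
    have h1 := hρ St.ϖ
    rw [St.ν_ϖ, h0, map_zero, norm_zero] at h1
    exact (inv_pos.2 hq0).ne h1
  obtain ⟨K, hK0, hK⟩ := coeff_bound St ⌊r⌋₊
  refine ⟨K * St.q ^ r, by positivity, ?_⟩
  rintro T b f D hT hf hD ⟨a, j⟩ hx
  have ha := (hT _ hx).1
  have hj := (hT _ hx).2
  simp only at ha hj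
  have hN := CrNorm_nonneg St (r := r) f D
  obtain ⟨Bf, hBf⟩ : ∃ Bf, ∀ z, ‖f z‖ ≤ Bf := by
    refine ⟨∑ x ∈ T, ‖b x‖ * ‖ρ St.ϖ ^ ⌊(lA St R x.1 : ℝ) * r⌋₊‖, fun z => ?_⟩
    rw [hf]
    refine norm_sum_le_of_le _ fun x _ => ?_
    rw [norm_mul, ebasis, norm_mul]
    refine mul_le_mul_of_nonneg_left ?_ (norm_nonneg _)
    exact mul_le_of_le_one_right (norm_nonneg _) (norm_coeval St _ _ _ _)
  have hgε : ∀ (n : ℕ) (a : O), a ∈ R.A n → ∀ y, gpart St R ρ r T b n (a + St.ϖ ^ n * y)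
      = f (a + St.ϖ ^ n * y) - epsTay St ⌊r⌋₊ f D a (St.ϖ ^ n * y) := by
    intro n a ha y
    rw [gpart_taylor St R ρ hr hϖ T b n hT a ha hf hD, epsTay, sub_sub_cancel]
    exact Finset.sum_congr rfl fun i _ => by ring
  have hmemA := mem_lA St R ha
  have hbound : ∀ y, ‖∑ i ∈ Idx S ⌊r⌋₊,
      (if (a, i) ∈ T then b (a, i) * ρ St.ϖ ^ ⌊(lA St R a : ℝ) * r⌋₊ else 0) * mpow St y i‖
      ≤ CrNorm St r f D * St.q ^ r * (St.q⁻¹ ^ lA St R a) ^ r := by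
    intro y
    rw [layer_sum St R ρ r hϖ T b hT a ha y]
    cases hn : lA St R a with
    | zero =>
      have h1 : (∑ x ∈ T, if lA St R x.1 = 0 then
          b x * ebasis St R ρ r x.1 x.2 (a + St.ϖ ^ 0 * y) else 0)
          = gpart St R ρ r T b 0 (a + St.ϖ ^ 0 * y) := by
        simp only [gpart, Nat.le_zero]
      rw [h1, gpart_taylor St R ρ hr hϖ T b 0 hT a (hn ▸ hmemA) hf hD]
      have h2 : CrNorm St r f D ≤ CrNorm St r f D * St.q ^ r * (St.q⁻¹ ^ 0) ^ r := by
        rw [pow_zero, Real.one_rpow, mul_one]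
        exact le_mul_of_one_le_right hN (Real.one_le_rpow hq.le hr)
      refine le_trans ?_ h2
      refine norm_sum_ultra St _ _ _ hN fun i hi => ?_
      exact (norm_term_le St _ _ _).trans (D_bound St hD i hi a)
    | succ m =>
      rw [hn] at hmemA
      obtain ⟨a', ⟨ha', w, hw⟩, -⟩ := R.hrep m a
      have hz : a + St.ϖ ^ (m + 1) * y = a' + St.ϖ ^ m * (w + St.ϖ * y) := by
        rw [hw]; ring
      have h1 : (∑ x ∈ T, if lA St R x.1 = m + 1 then
          b x * ebasis St R ρ r x.1 x.2 (a + St.ϖ ^ (m + 1) * y) else 0)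
          = gpart St R ρ r T b (m + 1) (a + St.ϖ ^ (m + 1) * y)
            - gpart St R ρ r T b m (a + St.ϖ ^ (m + 1) * y) := by
        rw [gpart, gpart, ← Finset.sum_sub_distrib]
        refine Finset.sum_congr rfl fun x _ => ?_
        rcases lt_trichotomy (lA St R x.1) (m + 1) with h | h | h
        · rw [if_neg h.ne, if_pos h.le, if_pos (by omega), sub_self]
        · rw [if_pos h, if_pos h.le, if_neg (by omega), sub_zero]
        · rw [if_neg h.ne', if_neg (by omega), if_neg (by omega), sub_self]
      have h2 : gpart St R ρ r T b m (a + St.ϖ ^ (m + 1) * y)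
          = f (a + St.ϖ ^ (m + 1) * y)
            - epsTay St ⌊r⌋₊ f D a' (St.ϖ ^ m * (w + St.ϖ * y)) := by
        rw [hz]
        exact hgε m a' ha' _
      rw [h1, h2, hgε (m + 1) a hmemA y]
      have e1 := eps_bound St hr hν hD Bf hBf a' (w + St.ϖ * y) m
      have e2 := eps_bound St hr hν hD Bf hBf a (St.ϖ * y) m
      have e3 : St.ϖ ^ m * (St.ϖ * y) = St.ϖ ^ (m + 1) * y := by ring
      rw [e3] at e2
      have e4 : CrNorm St r f D * St.q ^ r * (St.q⁻¹ ^ (m + 1)) ^ r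
          = CrNorm St r f D * (St.q⁻¹ ^ m) ^ r := by
        rw [mul_assoc, ← Real.mul_rpow (by positivity) (by positivity)]
        congr 2
        rw [pow_succ]
        field_simp
      rw [e4]
      rw [sub_sub_sub_cancel_left, sub_eq_add_neg]
      refine (St.norm_add_max _ _).trans (max_le e1 ?_)
      rw [norm_neg]
      exact e2
  have hfin := hK _ _ hbound j hj
  simp only [hx, if_true, norm_mul, norm_pow, hρ, St.ν_ϖ] at hfin
  have hpow : (St.q⁻¹ ^ lA St R a) ^ r ≤ St.q⁻¹ ^ ⌊(lA St R a : ℝ) * r⌋₊ := by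
    rw [← Real.rpow_natCast, ← Real.rpow_natCast, ← Real.rpow_mul (by positivity)]
    exact Real.rpow_le_rpow_of_exponent_ge (by positivity) (inv_lt_one_of_one_lt₀ hq).le
      (Nat.floor_le (by positivity))
  have hP : 0 < St.q⁻¹ ^ ⌊(lA St R a : ℝ) * r⌋₊ := by positivity
  refine le_of_mul_le_mul_right (hfin.trans ?_) hP
  calc K * (CrNorm St r f D * St.q ^ r * (St.q⁻¹ ^ lA St R a) ^ r)
      = K * St.q ^ r * CrNorm St r f D * (St.q⁻¹ ^ lA St R a) ^ r := by ring
    _ ≤ _ := mul_le_mul_of_nonneg_left hpow (by positivity)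

end CrPaper
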